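/- Let n ≥ 2 and N = 2^{n-1} − 1. Given any positive reals r_0, r_1, …, r_N, there exist weights λ_z ∈ [0,1] for z ∈ {0,1}^N satisfying (∑_{z: l(z)=l} λ_z)/(∑_{z: l(z)=l} (1−λ_z)) = r_l for every l ∈ {0,1,…,N}, such that the Markov kernel Q ∈ Δ_{N,n} defined by Q(·|z) = λ_z δ_{bin_n(2l(z))} + (1−λ_z) δ_{bin_n(2l(z)+1)} for all z ∈ {0,1}^N lies in the closure of F_{N,n}. -/

import Mathlib

open Finset

/-- The logistic sigmoid function `σ(a) = 1/(1+exp(-a))`. -/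
noncomputable def sigmoid (a : ℝ) : ℝ := 1 / (1 + Real.exp (-a))

/-- Real value of a bit. -/
def bval (b : Bool) : ℝ := if b then 1 else 0

/-- The set `F_{k,m}` of Markov kernels representable by a feedforward layer of `m`
sigmoid stochastic units with `k` binary inputs. -/
noncomputable def Fset (k m : ℕ) : Set ((Fin k → Bool) → (Fin m → Bool) → ℝ) :=
  {P | ∃ (V : Fin m → Fin k → ℝ) (c : Fin m → ℝ), ∀ y z,
    P y z = ∏ j, (if z j then sigmoid ((∑ i, V j i * bval (y i)) + c j)
                  else 1 - sigmoid ((∑ i, V j i * bval (y i)) + c j))}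

/-- `Δ_{k,n}`: all Markov kernels from `{0,1}^k` to distributions on `{0,1}^n`. -/
def markovKernels (k n : ℕ) : Set ((Fin k → Bool) → (Fin n → Bool) → ℝ) :=
  {P | (∀ y x, 0 ≤ P y x) ∧ ∀ y, ∑ x, P y x = 1}

/-- Composition of Markov kernels: `(R ∘ Q)(x|y) = ∑_z Q(z|y) R(x|z)`. -/
noncomputable def kcomp {k m n : ℕ} (R : (Fin m → Bool) → (Fin n → Bool) → ℝ)
    (Q : (Fin k → Bool) → (Fin m → Bool) → ℝ) : (Fin k → Bool) → (Fin n → Bool) → ℝ :=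
  fun y x => ∑ z, Q y z * R z x

/-- `Δ_n`: probability distributions on `{0,1}^n`. -/
def simplex (n : ℕ) : Set ((Fin n → Bool) → ℝ) :=
  {p | (∀ x, 0 ≤ p x) ∧ ∑ x, p x = 1}

/-- `Δ_n^+`: strictly positive probability distributions on `{0,1}^n`. -/
def simplexPos (n : ℕ) : Set ((Fin n → Bool) → ℝ) :=
  {p | (∀ x, 0 < p x) ∧ ∑ x, p x = 1}

/-- Mixture `p^⊤ R` of the rows of a kernel `R` with weights `p`. -/
noncomputable def mix {m n : ℕ} (p : (Fin m → Bool) → ℝ)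
    (R : (Fin m → Bool) → (Fin n → Bool) → ℝ) : (Fin n → Bool) → ℝ :=
  fun x => ∑ z, p z * R z x

/-- `E_m`: strictly positive product distributions on `{0,1}^m`, where the `j`-th bit
is `0` with probability `q j ∈ (0,1)`. -/
def Eset (m : ℕ) : Set ((Fin m → Bool) → ℝ) :=
  {p | ∃ q : Fin m → ℝ, (∀ j, q j ∈ Set.Ioo (0:ℝ) 1) ∧
    ∀ z, p z = ∏ j, (if z j then 1 - q j else q j)}

/-- Integer value of a binary vector (bit `i` has weight `2^i`). -/
def intval {k : ℕ} (y : Fin k → Bool) : ℕ := ∑ i, if y i then 2 ^ (i : ℕ) else 0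

/-- `l(z)`: position (1-based) of the largest nonzero entry of `z`, and `0` if `z = 0`. -/
def lidx {N : ℕ} (z : Fin N → Bool) : ℕ :=
  (Finset.univ.filter (fun j => z j = true)).sup (fun j => (j : ℕ) + 1)

/-- `bin_n(l)`: the `n`-bit binary representation of `l`. -/
def binVec (n l : ℕ) : Fin n → Bool := fun i => Nat.testBit l (i : ℕ)

/-- Point measure at `x ∈ {0,1}^n`. -/
noncomputable def deltaAt {n : ℕ} (x : Fin n → Bool) : (Fin n → Bool) → ℝ :=
  fun x' => if x' = x then 1 else 0

theorem lidx_le_iff {N : ℕ} (z : Fin N → Bool) (m : ℕ) :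
    lidx z ≤ m ↔ ∀ i, z i = true → (i : ℕ) + 1 ≤ m := by
  unfold lidx
  rw [Finset.sup_le_iff]
  simp

theorem lidx_succ_of_true {N : ℕ} (z : Fin (N+1) → Bool) (h : z (Fin.last N) = true) :
    lidx z = N + 1 := by
  apply le_antisymm
  · rw [lidx_le_iff]; intro i _; omega
  · have := (lidx_le_iff z (lidx z)).1 le_rfl _ h
    simpa using this

theorem lidx_succ_of_false {N : ℕ} (z : Fin (N+1) → Bool) (h : z (Fin.last N) = false) :
    lidx z = lidx (fun i : Fin N => z i.castSucc) := by
  apply eq_of_forall_ge_iff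
  intro m
  rw [lidx_le_iff, lidx_le_iff, Fin.forall_fin_succ']
  simp [h]

theorem lidx_true {N : ℕ} (z : Fin N → Bool) (m : Fin N) (h : lidx z = m + 1) :
    z m = true := by
  by_contra hm
  have : lidx z ≤ m := by
    rw [lidx_le_iff]
    intro i hi
    have h1 := (lidx_le_iff z (m+1)).1 h.le i hi
    have : i ≠ m := by rintro rfl; exact hm hi
    have : (i : ℕ) ≠ m := fun h => this (Fin.ext h)
    omega
  omega

theorem sigmoid_pos (a : ℝ) : 0 < sigmoid a := by unfold sigmoid; positivity

theorem one_sub_sigmoid (a : ℝ) : 1 - sigmoid a = sigmoid a * Real.exp (-a) := by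
  unfold sigmoid
  have : 0 < 1 + Real.exp (-a) := by positivity
  field_simp
  ring

theorem sigmoid_lt_one (a : ℝ) : sigmoid a < 1 := by
  have := one_sub_sigmoid a
  have h2 := mul_pos (sigmoid_pos a) (Real.exp_pos (-a))
  linarith

theorem continuous_sigm : Continuous sigmoid := by
  unfold sigmoid
  refine Continuous.div (by fun_prop) (by fun_prop) ?_
  intro x
  positivity

theorem tendsto_sigmoid_top : Filter.Tendsto sigmoid Filter.atTop (nhds 1) := by
  have h : Filter.Tendsto (fun a : ℝ => Real.exp (-a)) Filter.atTop (nhds 0) :=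
    Real.tendsto_exp_neg_atTop_nhds_zero
  have := (h.const_add 1).inv₀ (by norm_num)
  rw [add_zero, inv_one] at this
  refine this.congr ?_
  intro x
  simp [sigmoid]

theorem tendsto_sigmoid_bot : Filter.Tendsto sigmoid Filter.atBot (nhds 0) := by
  have h : Filter.Tendsto (fun a : ℝ => 1 + Real.exp (-a)) Filter.atBot Filter.atTop :=
    Filter.tendsto_atTop_add_const_left _ _
      (Real.tendsto_exp_atTop.comp Filter.tendsto_neg_atBot_atTop)
  have := h.inv_tendsto_atTop
  refine this.congr ?_
  intro x
  simp [sigmoid]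

/-- One-parameter balancing by the intermediate value theorem. -/
theorem exists_shift {ι : Type*} (S : Finset ι) (hS : S.Nonempty) (A : ι → ℝ) (r : ℝ)
    (hr : 0 < r) :
    ∃ t, (∑ z ∈ S, (1 - sigmoid (A z + t))) / (∑ z ∈ S, (1 - (1 - sigmoid (A z + t)))) = r := by
  let g : ℝ → ℝ := fun t => ∑ z ∈ S, ((1 - sigmoid (A z + t)) - r * sigmoid (A z + t))
  have hg : Continuous g := by
    refine continuous_finsetSum _ fun z _ => ?_
    have : Continuous fun t => sigmoid (A z + t) := continuous_sigm.comp (by fun_prop)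
    fun_prop
  have hB : ∀ z ∈ S, |A z| ≤ ∑ z ∈ S, |A z| := fun z hz =>
    Finset.single_le_sum (f := fun z => |A z|) (fun _ _ => abs_nonneg _) hz
  set B := ∑ z ∈ S, |A z|
  have key : ∀ a, (1 - sigmoid a) - r * sigmoid a = sigmoid a * (Real.exp (-a) - r) := by
    intro a; rw [one_sub_sigmoid]; ring
  have hlo : ∃ t, g t ≤ 0 := by
    refine ⟨-Real.log r + B, Finset.sum_nonpos fun z hz => ?_⟩
    rw [key]
    refine mul_nonpos_of_nonneg_of_nonpos (sigmoid_pos _).le ?_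
    have h1 := abs_le.1 (hB z hz)
    have : Real.exp (-(A z + (-Real.log r + B))) ≤ Real.exp (Real.log r) :=
      Real.exp_le_exp.2 (by linarith)
    rw [Real.exp_log hr] at this
    linarith
  have hhi : ∃ t, 0 ≤ g t := by
    refine ⟨-Real.log r - B, Finset.sum_nonneg fun z hz => ?_⟩
    rw [key]
    refine mul_nonneg (sigmoid_pos _).le ?_
    have h1 := abs_le.1 (hB z hz)
    have : Real.exp (Real.log r) ≤ Real.exp (-(A z + (-Real.log r - B))) :=
      Real.exp_le_exp.2 (by linarith)
    rw [Real.exp_log hr] at this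
    linarith
  obtain ⟨t, ht⟩ := mem_range_of_exists_le_of_exists_ge hg hlo hhi
  refine ⟨t, ?_⟩
  have hpos : 0 < ∑ z ∈ S, (1 - (1 - sigmoid (A z + t))) :=
    Finset.sum_pos (fun z _ => by have := sigmoid_pos (A z + t); linarith) hS
  rw [div_eq_iff hpos.ne']
  have ht' : ∑ z ∈ S, ((1 - sigmoid (A z + t)) - r * sigmoid (A z + t)) = 0 := ht
  rw [Finset.sum_sub_distrib, ← Finset.mul_sum] at ht'
  simp only [sub_sub_cancel]
  linarith

theorem lidx_nonempty (N l : ℕ) (hl : l ≤ N) :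
    (Finset.univ.filter (fun z : Fin N → Bool => lidx z = l)).Nonempty := by
  refine ⟨fun i => decide ((i : ℕ) < l), ?_⟩
  simp only [Finset.mem_filter, Finset.mem_univ, true_and]
  apply le_antisymm
  · rw [lidx_le_iff]; intro i hi; simpa using hi
  · rcases l with _ | l
    · simp
    · have := (lidx_le_iff (fun i : Fin N => decide ((i : ℕ) < l + 1)) _).1 le_rfl
        ⟨l, hl⟩ (by simp)
      simpa using this

/-- Inductive choice of the weights of the low-order output unit. -/
theorem exists_weights (N : ℕ) (r : ℕ → ℝ) (hr : ∀ l ≤ N, 0 < r l) (m : ℕ) (hm : m ≤ N) :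
    ∃ (v : Fin N → ℝ) (c : ℝ), ∀ l ≤ m,
      (∑ z ∈ Finset.univ.filter (fun z => lidx z = l),
          (1 - sigmoid ((∑ i, v i * bval (z i)) + c))) /
        (∑ z ∈ Finset.univ.filter (fun z => lidx z = l),
          (1 - (1 - sigmoid ((∑ i, v i * bval (z i)) + c)))) = r l := by
  induction m with
  | zero =>
    obtain ⟨t, ht⟩ := exists_shift _ (lidx_nonempty N 0 hm) (fun _ => 0) (r 0) (hr 0 hm)
    refine ⟨fun _ => 0, t, fun l hl => ?_⟩
    obtain rfl : l = 0 := by omega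
    simpa using ht
  | succ m ih =>
    obtain ⟨v, c, hv⟩ := ih (by omega)
    obtain ⟨t, ht⟩ := exists_shift _ (lidx_nonempty N (m+1) hm)
      (fun z => (∑ i, v i * bval (z i)) + c) (r (m+1)) (hr _ hm)
    let M : Fin N := ⟨m, hm⟩
    refine ⟨fun i => v i + if i = M then t else 0, c, fun l hl => ?_⟩
    have e : ∀ z : Fin N → Bool, ∑ i, (v i + if i = M then t else 0) * bval (z i)
        = (∑ i, v i * bval (z i)) + t * bval (z M) := by
      intro z
      simp only [add_mul, Finset.sum_add_distrib, ite_mul, zero_mul, Finset.sum_ite_eq',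
        Finset.mem_univ, if_true]
    have aux : ∀ a : (Fin N → Bool) → ℝ,
        (∀ z, lidx z = l → (∑ i, (v i + if i = M then t else 0) * bval (z i)) + c = a z) →
        (∑ z ∈ Finset.univ.filter (fun z => lidx z = l), (1 - sigmoid (a z))) /
          (∑ z ∈ Finset.univ.filter (fun z => lidx z = l), (1 - (1 - sigmoid (a z)))) = r l →
        (∑ z ∈ Finset.univ.filter (fun z => lidx z = l),
          (1 - sigmoid ((∑ i, (v i + if i = M then t else 0) * bval (z i)) + c))) /
        (∑ z ∈ Finset.univ.filter (fun z => lidx z = l),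
          (1 - (1 - sigmoid ((∑ i, (v i + if i = M then t else 0) * bval (z i)) + c)))) = r l := by
      intro a ha h
      rw [← h]
      congr 1
      · refine Finset.sum_congr rfl fun z hz => ?_
        rw [ha z (by simpa using hz)]
      · refine Finset.sum_congr rfl fun z hz => ?_
        rw [ha z (by simpa using hz)]
    rcases Nat.lt_or_ge m l with h | h
    · obtain rfl : l = m + 1 := by omega
      refine aux _ ?_ ht
      intro z hz
      rw [e, lidx_true z M hz]
      simp [bval]
      ring
    · refine aux _ ?_ (hv l h)
      intro z hz
      have : z M = false := by
        by_contra h'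
        have := (lidx_le_iff z l).1 hz.le M (by simpa using h')
        have h3 : (M : ℕ) = m := rfl
        omega
      rw [e, this]
      simp [bval]

theorem threshold (b : ℕ → Bool) (h0 : b 0 = false) (N : ℕ) (z : Fin N → Bool) :
    |(∑ i : Fin N, ((if b (i+1) then (1:ℝ) else -1) * 2 ^ (i:ℕ)) * bval (z i)) + (-1/2)|
        ≤ 2 ^ N - 1/2 ∧
    (b (lidx z) = true → 1/2 ≤
      (∑ i : Fin N, ((if b (i+1) then (1:ℝ) else -1) * 2 ^ (i:ℕ)) * bval (z i)) + (-1/2)) ∧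
    (b (lidx z) = false →
      (∑ i : Fin N, ((if b (i+1) then (1:ℝ) else -1) * 2 ^ (i:ℕ)) * bval (z i)) + (-1/2)
        ≤ -1/2) := by
  induction N with
  | zero =>
    have : lidx z = 0 := by
      have := (lidx_le_iff z 0).2 (fun i => i.elim0)
      omega
    simp [this, h0]
    norm_num [abs_of_neg, abs_le]
  | succ N ih =>
    obtain ⟨h1, h2, h3⟩ := ih (fun i => z i.castSucc)
    rw [Fin.sum_univ_castSucc]
    simp only [Fin.val_castSucc, Fin.val_last]
    set S := ∑ i : Fin N, ((if b (i+1) then (1:ℝ) else -1) * 2 ^ (i:ℕ)) * bval (z i.castSucc)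
    rw [abs_le] at h1 ⊢
    have hp : (1:ℝ) ≤ 2 ^ N := one_le_pow₀ (by norm_num)
    rw [pow_succ]
    cases hz : z (Fin.last N) with
    | true =>
      rw [lidx_succ_of_true z hz]
      rcases Bool.eq_false_or_eq_true (b (N+1)) with hb | hb
      · simp [bval, hb]
        refine ⟨⟨?_, ?_⟩, ?_⟩ <;> linarith [h1.1, h1.2]
      · simp [bval, hb]
        refine ⟨⟨?_, ?_⟩, ?_⟩ <;> linarith [h1.1, h1.2]
    | false =>
      rw [lidx_succ_of_false z hz]
      simp only [bval, Bool.false_eq_true, if_false, mul_zero, add_zero]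
      exact ⟨⟨by linarith [h1.1], by linarith [h1.2]⟩, h2, h3⟩

theorem prod_bit_indicator {m : ℕ} (x y : Fin m → Bool) :
    ∏ j, (if x j then (if y j then (1:ℝ) else 0) else 1 - (if y j then (1:ℝ) else 0))
      = if x = y then 1 else 0 := by
  have : ∀ j, (if x j then (if y j then (1:ℝ) else 0) else 1 - (if y j then (1:ℝ) else 0))
      = if x j = y j then 1 else 0 := by
    intro j; cases x j <;> cases y j <;> simp
  simp only [this, Finset.prod_ite_zero, Finset.prod_const_one, funext_iff, Finset.mem_univ,
    true_imp_iff]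

theorem eq_binVec_iff {m : ℕ} (x : Fin (m+1) → Bool) (l : ℕ) (b : Bool) :
    x = binVec (m+1) (2 * l + b.toNat) ↔ x 0 = b ∧ (fun j : Fin m => x j.succ) = binVec m l := by
  rw [funext_iff, funext_iff, Fin.forall_fin_succ]
  have h2 : (2 * l + b.toNat) / 2 = l := by cases b <;> simp <;> omega
  have h0 : Nat.testBit (2 * l + b.toNat) 0 = b := by
    cases b <;> simp [Nat.testBit_zero] 
  simp only [binVec, Fin.val_succ, Nat.testBit_succ, h2, Fin.val_zero, h0]

theorem main_aux (N m : ℕ) (r : ℕ → ℝ) (hr : ∀ l ≤ N, 0 < r l) :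
    ∃ lam : (Fin N → Bool) → ℝ,
      (∀ z, lam z ∈ Set.Icc (0:ℝ) 1) ∧
      (∀ l ≤ N,
        (∑ z ∈ Finset.univ.filter (fun z => lidx z = l), lam z) /
          (∑ z ∈ Finset.univ.filter (fun z => lidx z = l), (1 - lam z)) = r l) ∧
      (fun z x => lam z * deltaAt (binVec (m+1) (2 * lidx z)) x
          + (1 - lam z) * deltaAt (binVec (m+1) (2 * lidx z + 1)) x)
        ∈ closure (Fset N (m+1)) := by
  obtain ⟨v, c, hv⟩ := exists_weights N r hr N le_rfl
  refine ⟨fun z => 1 - sigmoid ((∑ i, v i * bval (z i)) + c), fun z => ?_, hv, ?_⟩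
  · have h1 := sigmoid_pos ((∑ i, v i * bval (z i)) + c)
    have h2 := sigmoid_lt_one ((∑ i, v i * bval (z i)) + c)
    exact ⟨by linarith, by linarith⟩
  let W : Fin m → Fin N → ℝ := fun j i =>
    (if Nat.testBit (i+1) j then (1:ℝ) else -1) * 2 ^ (i:ℕ)
  let V : ℕ → Fin (m+1) → Fin N → ℝ := fun k => Fin.cons v (fun j i => k * W j i)
  let C : ℕ → Fin (m+1) → ℝ := fun k => Fin.cons c (fun _ => k * (-1/2))
  let P : ℕ → (Fin N → Bool) → (Fin (m+1) → Bool) → ℝ := fun k y z =>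
    ∏ j, (if z j then sigmoid ((∑ i, V k j i * bval (y i)) + C k j)
                  else 1 - sigmoid ((∑ i, V k j i * bval (y i)) + C k j))
  refine mem_closure_of_tendsto (f := P) (b := Filter.atTop) ?_
    (Filter.Eventually.of_forall fun k => ⟨V k, C k, fun _ _ => rfl⟩)
  rw [tendsto_pi_nhds]; intro z
  rw [tendsto_pi_nhds]; intro x
  have hlim : ∀ j : Fin m, Filter.Tendsto
      (fun k : ℕ => sigmoid ((∑ i, V k j.succ i * bval (z i)) + C k j.succ)) Filter.atTop
      (nhds (if binVec m (lidx z) j then 1 else 0)) := by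
    intro j
    have he : ∀ k : ℕ, (∑ i, V k j.succ i * bval (z i)) + C k j.succ
        = k * ((∑ i, W j i * bval (z i)) + (-1/2)) := by
      intro k
      simp only [V, C, Fin.cons_succ, mul_add, Finset.mul_sum, mul_assoc]
    simp only [he]
    obtain ⟨-, h1, h2⟩ := threshold (fun l => Nat.testBit l j) (by simp) N z
    cases hb : binVec m (lidx z) j with
    | true =>
      have := h1 hb
      refine tendsto_sigmoid_top.comp ?_
      exact tendsto_natCast_atTop_atTop.atTop_mul_const (lt_of_lt_of_le (by norm_num) this)
    | false =>
      have := h2 hb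
      refine tendsto_sigmoid_bot.comp ?_
      exact tendsto_natCast_atTop_atTop.atTop_mul_const_of_neg (lt_of_le_of_lt this (by norm_num))
  set s := sigmoid ((∑ i, v i * bval (z i)) + c) with hs
  have hT : Filter.Tendsto (fun k => P k z x) Filter.atTop
      (nhds ((if x 0 then s else 1 - s) * ∏ j : Fin m,
        (if x j.succ then (if binVec m (lidx z) j then (1:ℝ) else 0)
          else 1 - (if binVec m (lidx z) j then (1:ℝ) else 0)))) := by
    simp only [P, Fin.prod_univ_succ]
    refine Filter.Tendsto.mul ?_ (tendsto_finsetProd _ fun j _ => ?_)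
    · simp only [V, C, Fin.cons_zero]
      exact tendsto_const_nhds
    · cases x j.succ with
      | true => simpa using hlim j
      | false => simpa using (hlim j).const_sub 1
  rw [prod_bit_indicator (fun j : Fin m => x j.succ)] at hT
  convert hT using 2
  have e0 := eq_binVec_iff x (lidx z) false
  have e1 := eq_binVec_iff x (lidx z) true
  simp only [Bool.toNat_false, Bool.toNat_true, add_zero] at e0 e1
  simp only [deltaAt, e0, e1]
  cases x 0 <;> simp [hs]

/-- Lemma 4: for `n ≥ 2`, `N = 2^(n-1) - 1` and any prescribed positive ratios `r_l`,
there are weights `λ_z ∈ [0,1]` realizing the ratios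
`(∑_{z : l(z)=l} λ_z)/(∑_{z : l(z)=l} (1-λ_z)) = r_l` such that the kernel
`Q(·|z) = λ_z δ_{bin_n(2l(z))} + (1-λ_z) δ_{bin_n(2l(z)+1)}` lies in the closure of
`F_{N,n}`. -/
theorem pairwise_mixture_kernel_mem_closure
    (n : ℕ) (hn : 2 ≤ n) (r : ℕ → ℝ) (hr : ∀ l ≤ 2 ^ (n - 1) - 1, 0 < r l) :
    ∃ lam : (Fin (2 ^ (n - 1) - 1) → Bool) → ℝ,
      (∀ z, lam z ∈ Set.Icc (0:ℝ) 1) ∧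
      (∀ l ≤ 2 ^ (n - 1) - 1,
        (∑ z ∈ Finset.univ.filter (fun z => lidx z = l), lam z) /
          (∑ z ∈ Finset.univ.filter (fun z => lidx z = l), (1 - lam z)) = r l) ∧
      (fun z x => lam z * deltaAt (binVec n (2 * lidx z)) x
          + (1 - lam z) * deltaAt (binVec n (2 * lidx z + 1)) x)
        ∈ closure (Fset (2 ^ (n - 1) - 1) n) := by
  obtain ⟨m, rfl⟩ : ∃ m, n = m + 1 := ⟨n - 1, by omega⟩
  exact main_aux _ m r hr
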